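/- arXiv:2009.00848 — 2 statements merged into one kernel-verified Lean document; each statement's English description precedes it below -/
import Mathlib

section
/- The process (M_n^*)_{n≥0} defined by M_0^* = 1 and M_n^* = [∏_{i=1}^n p_{α,β}(X_i;θ̃_{i-1})] / [∏_{i=1}^n p_{α,β}(X_i;θ*)] is a nonnegative supermartingale adapted to the natural filtration (F_n)_{n≥0}: for every n ≥ 1, E_{θ*}[M_n^* | F_{n-1}] ≤ M_{n-1}^* almost surely. -/
open MeasureTheory ENNReal
open scoped BigOperators Classical

noncomputable section

/-- Division in `ℝ≥0∞` with the convention that the ratio is `0` when the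
denominator is `0`. -/
def safeDiv (a b : ℝ≥0∞) : ℝ≥0∞ := if b = 0 then 0 else a / b

variable {d : ℕ} {π : Fin d → Type*} [∀ i, MeasurableSpace (π i)]

/-- The marginal density on the coordinates in `S`, obtained by integrating a density
out over the coordinates in `[d] \ S` (as a function of the full vector, depending only
on the coordinates in `S`). -/
def marginal (μ : ∀ i, Measure (π i)) (S : Finset (Fin d))
    (f : (∀ i, π i) → ℝ≥0∞) : (∀ i, π i) → ℝ≥0∞ :=
  MeasureTheory.lmarginal μ Sᶜ f

/-- The conditional density of the coordinates in `T1` given the coordinates in `T2`,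
with the convention that the ratio is `0` when the denominator is `0`. -/
def condDens (μ : ∀ i, Measure (π i)) (T1 T2 : Finset (Fin d))
    (f : (∀ i, π i) → ℝ≥0∞) (x : ∀ i, π i) : ℝ≥0∞ :=
  safeDiv (marginal μ (T1 ∪ T2) f x) (marginal μ T2 f x)

/-- `𝕊_d`: the nonempty subsets of `[d]`. -/
abbrev Sd (d : ℕ) := {S : Finset (Fin d) // S.Nonempty}

/-- `𝕋_d`: ordered pairs of disjoint nonempty subsets of `[d]`. -/
abbrev Td (d : ℕ) := {T : Finset (Fin d) × Finset (Fin d) //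
  T.1.Nonempty ∧ T.2.Nonempty ∧ Disjoint T.1 T.2}

/-- The individual composite likelihood
`p_{α,β}(x;θ) = ∏_S p_S(x_S;θ)^(α_S/γ) ∏_T p(x_{T←}|x_{T→};θ)^(β_T/γ)`,
where `f = p(·;θ)` is the joint density. -/
def compLik (μ : ∀ i, Measure (π i)) (α : Sd d → ℝ) (β : Td d → ℝ) (γ : ℝ)
    (f : (∀ i, π i) → ℝ≥0∞) (x : ∀ i, π i) : ℝ≥0∞ :=
  (∏ S : Sd d, marginal μ S.1 f x ^ (α S / γ)) *
  (∏ T : Td d, condDens μ T.1.1 T.1.2 f x ^ (β T / γ))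


lemma safeDiv_meas {Z : Type*} [MeasurableSpace Z] {a b : Z → ℝ≥0∞}
    (ha : Measurable a) (hb : Measurable b) : Measurable (fun z => safeDiv (a z) (b z)) := by
  unfold safeDiv
  exact Measurable.ite (hb (measurableSet_singleton 0)) measurable_const (ha.div hb)

lemma safeDiv_eq_mul (a b : ℝ≥0∞) : safeDiv a b = a * safeDiv 1 b := by
  unfold safeDiv; split_ifs <;> simp [div_eq_mul_inv]

lemma safeDiv_of_ne {a b : ℝ≥0∞} (hb : b ≠ 0) : safeDiv a b = a * b⁻¹ := by
  unfold safeDiv; simp [hb, div_eq_mul_inv]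

lemma safeDiv_mul_le (a b : ℝ≥0∞) : safeDiv a b * b ≤ a := by
  unfold safeDiv; split_ifs with h
  · simp
  · rw [mul_comm]; exact ENNReal.mul_div_le

lemma safeDiv_safeDiv_mul_le (a c e : ℝ≥0∞) : safeDiv a (safeDiv c e) * c ≤ a * e := by
  by_cases he : e = 0
  · simp [safeDiv, he]
  by_cases het : e = ∞
  · simp [safeDiv, het]
  by_cases hc : c = 0
  · simp [hc]
  by_cases hct : c = ∞
  · simp [safeDiv, hct, he, ENNReal.top_div, het]
  rw [safeDiv_of_ne he, safeDiv_of_ne (mul_ne_zero hc (ENNReal.inv_ne_zero.2 het)),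
    ENNReal.mul_inv (Or.inl hc) (Or.inl hct), inv_inv, mul_comm c⁻¹, mul_assoc, mul_assoc,
    ENNReal.inv_mul_cancel hc hct, mul_one]

lemma safeDiv_prod {ι : Type*} (s : Finset ι) (a b : ι → ℝ≥0∞)
    (hb : ∀ i, b i ≠ 0) (hb' : ∀ i, b i ≠ ∞) :
    safeDiv (∏ i ∈ s, a i) (∏ i ∈ s, b i) = ∏ i ∈ s, safeDiv (a i) (b i) := by
  rw [safeDiv_of_ne (Finset.prod_ne_zero_iff.2 fun i _ => hb i),
    ENNReal.prod_inv_distrib]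
  · rw [← Finset.prod_mul_distrib]
    exact Finset.prod_congr rfl fun i _ => (safeDiv_of_ne (hb i)).symm
  · intro i _ j _ _
    exact Or.inl (hb i)

lemma lmarginal_dep_mul (μ : ∀ i, Measure (π i)) [∀ i, SigmaFinite (μ i)] (s : Finset (Fin d))
    {h g : (∀ i, π i) → ℝ≥0∞} (hg : Measurable g)
    (hdep : ∀ x y : ∀ i, π i, (∀ i ∉ s, x i = y i) → h x = h y) (x : ∀ i, π i) :
    lmarginal μ s (fun z => h z * g z) x = h x * lmarginal μ s g x := by
  unfold lmarginal
  rw [← lintegral_const_mul]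
  · refine lintegral_congr fun y => ?_
    dsimp only
    rw [hdep (Function.updateFinset x s y) x]
    intro i hi
    simp [Function.updateFinset, hi]
  · exact hg.comp measurable_updateFinset

lemma marginal_dep (μ : ∀ i, Measure (π i)) (S : Finset (Fin d)) (f : (∀ i, π i) → ℝ≥0∞)
    (x y : ∀ i, π i) (h : ∀ i ∈ S, x i = y i) : marginal μ S f x = marginal μ S f y :=
  lmarginal_congr μ f fun i hi => h i (by simpa using hi)

lemma marginal_meas (μ : ∀ i, Measure (π i)) [∀ i, SigmaFinite (μ i)] (S : Finset (Fin d))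
    {f : (∀ i, π i) → ℝ≥0∞} (hf : Measurable f) : Measurable (marginal μ S f) :=
  hf.lmarginal μ

lemma marginal_joint_meas (μ : ∀ i, Measure (π i)) [∀ i, SigmaFinite (μ i)] (S : Finset (Fin d))
    {Θ : Type*} [MeasurableSpace Θ] {p : Θ → (∀ i, π i) → ℝ≥0∞}
    (hp : Measurable (Function.uncurry p)) :
    Measurable (fun z : Θ × (∀ i, π i) => marginal μ S (p z.1) z.2) := by
  unfold marginal lmarginal
  refine Measurable.lintegral_prod_right'
    (f := fun (q : (Θ × (∀ i, π i)) × (∀ i : (Sᶜ : Finset (Fin d)), π i)) =>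
      p q.1.1 (Function.updateFinset q.1.2 Sᶜ q.2)) ?_
  have : Measurable (fun (q : (Θ × (∀ i, π i)) × (∀ i : (Sᶜ : Finset (Fin d)), π i)) =>
      (q.1.1, Function.updateFinset q.1.2 Sᶜ q.2)) := by
    refine Measurable.prodMk (by fun_prop) ?_
    exact measurable_updateFinset'.comp ((measurable_snd.comp measurable_fst).prodMk measurable_snd)
  exact hp.comp this

lemma lint_marg (μ : ∀ i, Measure (π i)) [∀ i, SigmaFinite (μ i)] (S : Finset (Fin d))
    {f g : (∀ i, π i) → ℝ≥0∞} (hf : Measurable f) (hg : Measurable g) :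
    ∫⁻ x, safeDiv (marginal μ S f x) (marginal μ S g x) * g x ∂(Measure.pi μ)
      ≤ ∫⁻ x, f x ∂(Measure.pi μ) := by
  refine lintegral_le_of_lmarginal_le Sᶜ
    ((safeDiv_meas (marginal_meas μ S hf) (marginal_meas μ S hg)).mul hg) hf ?_
  intro x
  rw [lmarginal_dep_mul μ Sᶜ hg]
  · exact safeDiv_mul_le _ _
  · intro x y h
    rw [marginal_dep μ S f x y (by simpa using h), marginal_dep μ S g x y (by simpa using h)]

lemma lint_cond (μ : ∀ i, Measure (π i)) [∀ i, SigmaFinite (μ i)] (A B : Finset (Fin d))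
    (hAB : Disjoint A B)
    {f g : (∀ i, π i) → ℝ≥0∞} (hf : Measurable f) (hg : Measurable g) :
    ∫⁻ x, safeDiv (condDens μ A B f x) (condDens μ A B g x) * g x ∂(Measure.pi μ)
      ≤ ∫⁻ x, g x ∂(Measure.pi μ) := by
  have hm : ∀ {k : (∀ i, π i) → ℝ≥0∞}, Measurable k → Measurable (condDens μ A B k) :=
    fun hk => safeDiv_meas (marginal_meas μ _ hk) (marginal_meas μ _ hk)
  have hdepU : ∀ k : (∀ i, π i) → ℝ≥0∞, ∀ x y : ∀ i, π i, (∀ i ∉ (A ∪ B)ᶜ, x i = y i) →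
      condDens μ A B k x = condDens μ A B k y := by
    intro k x y h
    unfold condDens
    rw [marginal_dep μ (A ∪ B) k x y (fun i hi => h i (by simpa only [Finset.mem_compl, not_not] using hi)),
      marginal_dep μ B k x y (fun i hi => h i (by simp [hi]))]
  have hset : Bᶜ = A ∪ (A ∪ B)ᶜ := by
    ext i
    have : i ∈ A → i ∉ B := fun h => Finset.disjoint_left.1 hAB h
    simp only [Finset.mem_compl, Finset.mem_union]; tauto
  have hdisj : Disjoint A (A ∪ B)ᶜ := by
    rw [Finset.disjoint_left]; intro i hi; simp [hi]
  have hmeas : Measurable fun x => safeDiv (condDens μ A B f x) (condDens μ A B g x) * g x :=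
    (safeDiv_meas (hm hf) (hm hg)).mul hg
  refine lintegral_le_of_lmarginal_le Bᶜ hmeas hg ?_
  intro x
  have e1 : lmarginal μ Bᶜ (fun x => safeDiv (condDens μ A B f x) (condDens μ A B g x) * g x) x
      = lmarginal μ A (fun x => safeDiv (condDens μ A B f x) (condDens μ A B g x)
          * marginal μ (A ∪ B) g x) x := by
    rw [hset, lmarginal_union μ _ hmeas hdisj]
    congr 1
    ext y
    rw [lmarginal_dep_mul μ _ hg]
    · rfl
    · intro x y h
      rw [hdepU f x y h, hdepU g x y h]
  have e2 : lmarginal μ A (marginal μ (A ∪ B) f) = marginal μ B f := by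
    unfold marginal
    rw [hset, lmarginal_union μ _ hf hdisj]
  rw [e1]
  calc _ ≤ lmarginal μ A (fun x => (safeDiv 1 (marginal μ B f x) * marginal μ B g x)
            * marginal μ (A ∪ B) f x) x := by
        refine lmarginal_mono (fun y => ?_) x
        refine (safeDiv_safeDiv_mul_le _ _ _).trans (le_of_eq ?_)
        unfold condDens
        rw [safeDiv_eq_mul]
        ring
    _ = (safeDiv 1 (marginal μ B f x) * marginal μ B g x) * marginal μ B f x := by
        rw [lmarginal_dep_mul μ A (marginal_meas μ _ hf), e2]
        intro x y h
        have h' : ∀ i ∈ B, x i = y i := fun i hi => h i (Finset.disjoint_right.1 hAB hi)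
        rw [marginal_dep μ B f x y h', marginal_dep μ B g x y h']
    _ = (safeDiv 1 (marginal μ B f x) * marginal μ B f x) * marginal μ B g x := by ring
    _ ≤ 1 * marginal μ B g x := by gcongr; exact safeDiv_mul_le _ _
    _ = _ := by rw [one_mul]; rfl

lemma marg_ne_zero (μ : ∀ i, Measure (π i)) [∀ i, SigmaFinite (μ i)] (S : Finset (Fin d))
    {g : (∀ i, π i) → ℝ≥0∞} (hg : Measurable g) :
    ∀ᵐ x ∂((Measure.pi μ).withDensity g), marginal μ S g x ≠ 0 := by
  have hms : MeasurableSet {x | marginal μ S g x = 0} :=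
    marginal_meas μ S hg (measurableSet_singleton 0)
  have h0 : ∫⁻ x, (if marginal μ S g x = 0 then 1 else 0) * g x ∂(Measure.pi μ)
      ≤ ∫⁻ x, (fun _ => (0 : ℝ≥0∞)) x ∂(Measure.pi μ) := by
    refine lintegral_le_of_lmarginal_le Sᶜ
      ((Measurable.ite hms measurable_const measurable_const).mul hg) measurable_const ?_
    intro x
    rw [lmarginal_dep_mul μ Sᶜ hg]
    · change _ * marginal μ S g x ≤ _
      split_ifs with h <;> simp [h]
    · intro x y h
      rw [marginal_dep μ S g x y (by simpa using h)]
  rw [ae_iff]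
  simp only [ne_eq, not_not]
  rw [withDensity_apply _ hms, ← lintegral_indicator hms]
  refine le_antisymm ((le_of_eq ?_).trans (h0.trans (by simp))) zero_le
  refine lintegral_congr fun x => ?_
  simp [Set.indicator_apply]

lemma marg_ne_top (μ : ∀ i, Measure (π i)) [∀ i, SigmaFinite (μ i)] (S : Finset (Fin d))
    {g : (∀ i, π i) → ℝ≥0∞} (hg : Measurable g) (hg1 : ∫⁻ x, g x ∂(Measure.pi μ) = 1) :
    ∀ᵐ x ∂((Measure.pi μ).withDensity g), marginal μ S g x ≠ ∞ := by
  have hms : MeasurableSet {x | marginal μ S g x = ∞} :=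
    marginal_meas μ S hg (measurableSet_singleton ∞)
  have hdep : ∀ c : ℝ≥0∞, ∀ x y : ∀ i, π i, (∀ i ∉ Sᶜ, x i = y i) →
      (if marginal μ S g x = ∞ then c else 0) = (if marginal μ S g y = ∞ then c else 0) := by
    intro c x y h
    rw [marginal_dep μ S g x y (by simpa using h)]
  have hme : ∀ c : ℝ≥0∞, Measurable fun x => (if marginal μ S g x = ∞ then c else 0) * g x :=
    fun c => (Measurable.ite hms measurable_const measurable_const).mul hg
  have h0 : ∫⁻ x, (if marginal μ S g x = ∞ then 2 else 0) * g x ∂(Measure.pi μ)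
      ≤ ∫⁻ x, (if marginal μ S g x = ∞ then 1 else 0) * g x ∂(Measure.pi μ) := by
    refine lintegral_le_of_lmarginal_le Sᶜ (hme 2) (hme 1) ?_
    intro x
    rw [lmarginal_dep_mul μ Sᶜ hg (hdep 2), lmarginal_dep_mul μ Sᶜ hg (hdep 1)]
    change _ * marginal μ S g x ≤ _ * marginal μ S g x
    split_ifs with h <;> simp [h]
  have h2 : ∫⁻ x, (if marginal μ S g x = ∞ then 2 else 0) * g x ∂(Measure.pi μ)
      = 2 * ∫⁻ x, (if marginal μ S g x = ∞ then 1 else 0) * g x ∂(Measure.pi μ) := by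
    rw [← lintegral_const_mul _ (hme 1)]
    refine lintegral_congr fun x => ?_
    split_ifs <;> simp
  have hfin : ∫⁻ x, (if marginal μ S g x = ∞ then 1 else 0) * g x ∂(Measure.pi μ) ≤ 1 := by
    refine le_trans ?_ hg1.le
    refine lintegral_mono fun x => ?_
    exact mul_le_of_le_one_left' (by split_ifs <;> simp)
  rw [h2, two_mul] at h0
  have hz : ∫⁻ x, (if marginal μ S g x = ∞ then 1 else 0) * g x ∂(Measure.pi μ) = 0 := by
    by_contra hne
    exact absurd h0 (not_le.2 (ENNReal.lt_add_right (hfin.trans_lt ENNReal.one_lt_top).ne hne))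
  rw [ae_iff]
  simp only [ne_eq, not_not]
  rw [withDensity_apply _ hms, ← lintegral_indicator hms, ← hz]
  refine lintegral_congr fun x => ?_
  simp [Set.indicator_apply]

/-- The individual factors of the composite likelihood. -/
def clFac (μ : ∀ i, Measure (π i)) (f : (∀ i, π i) → ℝ≥0∞) (x : ∀ i, π i) :
    Sd d ⊕ Td d → ℝ≥0∞
  | .inl S => marginal μ S.1 f x
  | .inr T => condDens μ T.1.1 T.1.2 f x

lemma compLik_eq (μ : ∀ i, Measure (π i)) (α : Sd d → ℝ) (β : Td d → ℝ) (γ : ℝ)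
    (f : (∀ i, π i) → ℝ≥0∞) (x : ∀ i, π i) :
    compLik μ α β γ f x = ∏ i, clFac μ f x i ^ (Sum.elim α β i / γ) := by
  rw [Fintype.prod_sum_type]; rfl

lemma clFac_ne (μ : ∀ i, Measure (π i)) [∀ i, SigmaFinite (μ i)]
    {g : (∀ i, π i) → ℝ≥0∞} (hg : Measurable g) (hg1 : ∫⁻ x, g x ∂(Measure.pi μ) = 1) :
    ∀ᵐ x ∂((Measure.pi μ).withDensity g), ∀ i, clFac μ g x i ≠ 0 ∧ clFac μ g x i ≠ ∞ := by
  filter_upwards [ae_all_iff.2 fun S => marg_ne_zero μ S hg,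
    ae_all_iff.2 fun S => marg_ne_top μ S hg hg1] with x h0 ht i
  rcases i with S | T
  · exact ⟨h0 _, ht _⟩
  · simp only [clFac, condDens]
    rw [safeDiv_of_ne (h0 _)]
    exact ⟨mul_ne_zero (h0 _) (ENNReal.inv_ne_zero.2 (ht _)),
      ENNReal.mul_ne_top (ht _) (ENNReal.inv_ne_top.2 (h0 _))⟩

lemma compLik_ne (μ : ∀ i, Measure (π i)) [∀ i, SigmaFinite (μ i)]
    (α : Sd d → ℝ) (β : Td d → ℝ) (γ : ℝ)
    {g : (∀ i, π i) → ℝ≥0∞} (hg : Measurable g) (hg1 : ∫⁻ x, g x ∂(Measure.pi μ) = 1) :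
    ∀ᵐ x ∂((Measure.pi μ).withDensity g),
      compLik μ α β γ g x ≠ 0 ∧ compLik μ α β γ g x ≠ ∞ := by
  filter_upwards [clFac_ne μ hg hg1] with x hx
  rw [compLik_eq]
  exact ⟨Finset.prod_ne_zero_iff.2 fun i _ =>
      (ENNReal.rpow_pos (pos_iff_ne_zero.2 (hx i).1) (hx i).2).ne',
    ENNReal.prod_ne_top fun i _ => ENNReal.rpow_ne_top_of_ne_zero (hx i).1 (hx i).2⟩

lemma ratio_lint (μ : ∀ i, Measure (π i)) [∀ i, SigmaFinite (μ i)]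
    (α : Sd d → ℝ) (β : Td d → ℝ)
    (hα : ∀ S, 0 ≤ α S) (hβ : ∀ T, 0 ≤ β T)
    (γ : ℝ) (hγ : γ = ∑ S, α S + ∑ T, β T) (hγpos : 0 < γ)
    {f g : (∀ i, π i) → ℝ≥0∞} (hf : Measurable f) (hf1 : ∫⁻ x, f x ∂(Measure.pi μ) = 1)
    (hg : Measurable g) (hg1 : ∫⁻ x, g x ∂(Measure.pi μ) = 1) :
    ∫⁻ x, safeDiv (compLik μ α β γ f x) (compLik μ α β γ g x)
      ∂((Measure.pi μ).withDensity g) ≤ 1 := by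
  have hw : ∀ i, 0 ≤ Sum.elim α β i / γ := by
    rintro (S | T)
    · exact div_nonneg (hα S) hγpos.le
    · exact div_nonneg (hβ T) hγpos.le
  have hfm : ∀ {k : (∀ i, π i) → ℝ≥0∞}, Measurable k → ∀ i, Measurable fun x => clFac μ k x i := by
    rintro k hk (S | T)
    · exact marginal_meas μ _ hk
    · exact safeDiv_meas (marginal_meas μ _ hk) (marginal_meas μ _ hk)
  have hrm : ∀ i, Measurable fun x => safeDiv (clFac μ f x i) (clFac μ g x i) :=
    fun i => safeDiv_meas (hfm hf i) (hfm hg i)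
  calc _ = ∫⁻ x, ∏ i, safeDiv (clFac μ f x i) (clFac μ g x i) ^ (Sum.elim α β i / γ)
        ∂((Measure.pi μ).withDensity g) := by
        refine lintegral_congr_ae ?_
        filter_upwards [clFac_ne μ hg hg1] with x hx
        have hp : ∀ i, clFac μ g x i ^ (Sum.elim α β i / γ) ≠ 0 := fun i =>
          (ENNReal.rpow_pos (pos_iff_ne_zero.2 (hx i).1) (hx i).2).ne'
        rw [compLik_eq, compLik_eq, safeDiv_prod _ _ _ hp
          (fun i => ENNReal.rpow_ne_top_of_ne_zero (hx i).1 (hx i).2)]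
        refine Finset.prod_congr rfl fun i _ => ?_
        rw [safeDiv_of_ne (hp i), safeDiv_of_ne (hx i).1, ENNReal.mul_rpow_of_nonneg _ _ (hw i),
          ENNReal.inv_rpow]
    _ ≤ ∏ i, (∫⁻ x, safeDiv (clFac μ f x i) (clFac μ g x i)
          ∂((Measure.pi μ).withDensity g)) ^ (Sum.elim α β i / γ) := by
        refine ENNReal.lintegral_prod_norm_pow_le _ (fun i _ => (hrm i).aemeasurable) ?_
          (fun i _ => hw i)
        rw [← Finset.sum_div, Fintype.sum_sum_type]
        simp only [Sum.elim_inl, Sum.elim_inr]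
        rw [← hγ, div_self hγpos.ne']
    _ ≤ 1 := by
        refine Finset.prod_le_one' fun i _ => ?_
        refine ENNReal.rpow_le_one ?_ (hw i)
        rw [lintegral_withDensity_eq_lintegral_mul _ hg (hrm i)]
        simp only [Pi.mul_apply, mul_comm (g _)]
        rcases i with S | T
        · exact (lint_marg μ S.1 hf hg).trans hf1.le
        · exact (lint_cond μ T.1.1 T.1.2 T.2.2.2 hf hg).trans hg1.le

lemma compLik_joint_meas (μ : ∀ i, Measure (π i)) [∀ i, SigmaFinite (μ i)]
    (α : Sd d → ℝ) (β : Td d → ℝ) (γ : ℝ)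
    {Θ : Type*} [MeasurableSpace Θ] {p : Θ → (∀ i, π i) → ℝ≥0∞}
    (hp : Measurable (Function.uncurry p)) :
    Measurable (fun z : Θ × (∀ i, π i) => compLik μ α β γ (p z.1) z.2) := by
  unfold compLik
  refine Measurable.mul ?_ ?_
  · exact Finset.measurable_fun_prod _ fun S _ =>
      (marginal_joint_meas μ _ hp).pow_const _
  · exact Finset.measurable_fun_prod _ fun T _ =>
      (safeDiv_meas (marginal_joint_meas μ _ hp) (marginal_joint_meas μ _ hp)).pow_const _

lemma ratio_meas {Ω Θ E : Type*} (m : MeasurableSpace Ω) [MeasurableSpace Θ] [MeasurableSpace E]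
    {a : Θ → E → ℝ≥0∞} (ha : Measurable fun z : Θ × E => a z.1 z.2) (θ₀ : Θ) (n : ℕ)
    {t : ℕ → Ω → Θ} {X : ℕ → Ω → E} (ht : ∀ i, i < n → Measurable (t i))
    (hX : ∀ i, i < n → Measurable (X i)) :
    Measurable fun ω => safeDiv (∏ i ∈ Finset.range n, a (t i ω) (X i ω))
        (∏ i ∈ Finset.range n, a θ₀ (X i ω)) := by
  refine safeDiv_meas ?_ ?_
  · refine Finset.measurable_fun_prod _ fun i hi => ?_
    have hi' := Finset.mem_range.1 hi
    exact ha.comp ((ht i hi').prodMk (hX i hi'))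
  · refine Finset.measurable_fun_prod _ fun i hi => ?_
    have hi' := Finset.mem_range.1 hi
    exact ha.comp (measurable_const.prodMk (hX i hi'))

lemma set_step {Ω Θ E : Type*} [MeasurableSpace Ω] [MeasurableSpace Θ] [MeasurableSpace E]
    (Pr : Measure Ω) [IsProbabilityMeasure Pr]
    {a : Θ → E → ℝ≥0∞} (ham : Measurable fun z : Θ × E => a z.1 z.2) (θ₀ : Θ)
    (M : Ω → ℝ≥0∞) {s : Set Ω} (hs : MeasurableSet s) {t : Ω → Θ} (ht : Measurable t)
    (hY : Measurable (s.indicator M)) {X : Ω → E} (hX : Measurable X)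
    (hi : ProbabilityTheory.IndepFun (fun ω => (t ω, s.indicator M ω)) X Pr)
    (hle : ∀ θ, ∫⁻ x, safeDiv (a θ x) (a θ₀ x) ∂(Measure.map X Pr) ≤ 1) :
    ∫⁻ ω in s, M ω * safeDiv (a (t ω) (X ω)) (a θ₀ (X ω)) ∂Pr ≤ ∫⁻ ω in s, M ω ∂Pr := by
  have hV : Measurable fun ω => (t ω, s.indicator M ω) := ht.prodMk hY
  have hmap := (ProbabilityTheory.indepFun_iff_map_prod_eq_prod_map_map hV.aemeasurable
    hX.aemeasurable).1 hi
  have hrm : Measurable fun z : (Θ × ℝ≥0∞) × E =>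
      safeDiv (a z.1.1 z.2) (a θ₀ z.2) :=
    safeDiv_meas (ham.comp ((measurable_fst.comp measurable_fst).prodMk measurable_snd))
      (ham.comp (measurable_const.prodMk measurable_snd))
  have hG : Measurable fun z : (Θ × ℝ≥0∞) × E =>
      z.1.2 * safeDiv (a z.1.1 z.2) (a θ₀ z.2) :=
    (measurable_snd.comp measurable_fst).mul hrm
  have : IsProbabilityMeasure (Measure.map X Pr) :=
    Measure.isProbabilityMeasure_map hX.aemeasurable
  calc ∫⁻ ω in s, M ω * safeDiv (a (t ω) (X ω)) (a θ₀ (X ω)) ∂Pr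
      = ∫⁻ ω, s.indicator M ω * safeDiv (a (t ω) (X ω)) (a θ₀ (X ω)) ∂Pr := by
        rw [← lintegral_indicator hs]
        refine lintegral_congr fun ω => ?_
        by_cases h : ω ∈ s <;> simp [h]
    _ = ∫⁻ z, z.1.2 * safeDiv (a z.1.1 z.2) (a θ₀ z.2)
          ∂(Measure.map (fun ω => ((t ω, s.indicator M ω), X ω)) Pr) := by
        rw [lintegral_map hG (hV.prodMk hX)]
    _ = ∫⁻ v, ∫⁻ x, v.2 * safeDiv (a v.1 x) (a θ₀ x) ∂(Measure.map X Pr)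
          ∂(Measure.map (fun ω => (t ω, s.indicator M ω)) Pr) := by
        rw [hmap, lintegral_prod _ hG.aemeasurable]
    _ ≤ ∫⁻ v, v.2 ∂(Measure.map (fun ω => (t ω, s.indicator M ω)) Pr) := by
        refine lintegral_mono fun v => ?_
        dsimp only
        have hx : Measurable fun x => safeDiv (a v.1 x) (a θ₀ x) :=
          hrm.comp (measurable_const.prodMk measurable_id : Measurable fun x : E => (v, x))
        rw [lintegral_const_mul _ hx]
        exact mul_le_of_le_one_right' (hle v.1)
    _ = ∫⁻ ω, s.indicator M ω ∂Pr := by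
        rw [lintegral_map measurable_snd hV]
    _ = ∫⁻ ω in s, M ω ∂Pr := lintegral_indicator hs _

/-- The process `(M_n^*)_{n≥0}` with `M_0^* = 1` and
`M_n^* = ∏_{i=1}^n p_{α,β}(X_i;θ̃_{i-1}) / ∏_{i=1}^n p_{α,β}(X_i;θ*)` is a
nonnegative supermartingale adapted to the natural filtration `(F_n)_{n≥0}`:
it is nonnegative, integrable and adapted, and for every `n ≥ 1`,
`E_{θ*}[M_n^* | F_{n-1}] ≤ M_{n-1}^*` almost surely. -/
theorem running_CL_ratio_supermartingale
    {d : ℕ} (hd : 1 ≤ d)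
    {π : Fin d → Type*} [∀ i, MeasurableSpace (π i)]
    (μ : ∀ i, Measure (π i)) [∀ i, SigmaFinite (μ i)]
    {Θ : Type*} [MeasurableSpace Θ]
    (p : Θ → (∀ i, π i) → ℝ≥0∞)
    (hp_meas : Measurable (Function.uncurry p))
    (hp_prob : ∀ θ : Θ, ∫⁻ x, p θ x ∂(Measure.pi μ) = 1)
    (α : Sd d → ℝ) (β : Td d → ℝ)
    (hα : ∀ S, 0 ≤ α S) (hβ : ∀ T, 0 ≤ β T)
    (γ : ℝ) (hγ : γ = ∑ S, α S + ∑ T, β T) (hγpos : 0 < γ)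
    {Ω : Type*} [MeasurableSpace Ω]
    (Pr : Measure Ω) [IsProbabilityMeasure Pr]
    (θstar : Θ)
    -- `X 0, X 1, X 2, …` is the i.i.d. sequence `X_1, X_2, …` (0-indexed),
    -- each observation having density `p(·;θ*)` with respect to `μ`
    (X : ℕ → Ω → (∀ i, π i))
    (hX : ∀ i, Measurable (X i))
    (hiid : ProbabilityTheory.iIndepFun X Pr)
    (hlaw : ∀ i, Measure.map (X i) Pr = (Measure.pi μ).withDensity (p θstar))
    -- the natural filtration `F n = σ(X_1,…,X_n)` (so `F 0` is trivial)
    (F : ℕ → MeasurableSpace Ω)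
    (hF : ∀ n, F n = MeasurableSpace.comap (fun ω => fun j : Fin n => X j ω)
      (inferInstance : MeasurableSpace (Fin n → ∀ i, π i)))
    -- non-anticipating estimators: `θtilde i` is the estimator `θ̃_i`
    -- built from `X_1,…,X_i`, i.e. measurable with respect to `F i`
    (θtilde : ℕ → Ω → Θ)
    (hθtilde : ∀ i, @Measurable Ω Θ (F i) _ (θtilde i)) :
    -- nonnegativity
    (∀ n ω, 0 ≤ (safeDiv
        (∏ i ∈ Finset.range n, compLik μ α β γ (p (θtilde i ω)) (X i ω))
        (∏ i ∈ Finset.range n, compLik μ α β γ (p θstar) (X i ω))).toReal) ∧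
    -- adaptedness to the natural filtration
    (∀ n, @Measurable Ω ℝ (F n) _ (fun ω => (safeDiv
        (∏ i ∈ Finset.range n, compLik μ α β γ (p (θtilde i ω)) (X i ω))
        (∏ i ∈ Finset.range n, compLik μ α β γ (p θstar) (X i ω))).toReal)) ∧
    -- integrability
    (∀ n, Integrable (fun ω => (safeDiv
        (∏ i ∈ Finset.range n, compLik μ α β γ (p (θtilde i ω)) (X i ω))
        (∏ i ∈ Finset.range n, compLik μ α β γ (p θstar) (X i ω))).toReal) Pr) ∧
    -- the supermartingale property `E[M_n^* | F_{n-1}] ≤ M_{n-1}^*` a.s. for `n ≥ 1`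
    (∀ n : ℕ, 0 < n →
      Pr[(fun ω => (safeDiv
          (∏ i ∈ Finset.range n, compLik μ α β γ (p (θtilde i ω)) (X i ω))
          (∏ i ∈ Finset.range n, compLik μ α β γ (p θstar) (X i ω))).toReal) |
        F (n - 1)]
      ≤ᵐ[Pr] fun ω => (safeDiv
          (∏ i ∈ Finset.range (n - 1), compLik μ α β γ (p (θtilde i ω)) (X i ω))
          (∏ i ∈ Finset.range (n - 1), compLik μ α β γ (p θstar) (X i ω))).toReal) := by
  have hps : ∀ θ, Measurable (p θ) := fun θ => hp_meas.comp (measurable_const.prodMk measurable_id)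
  set a : Θ → (∀ i, π i) → ℝ≥0∞ := fun θ x => compLik μ α β γ (p θ) x with ha
  have ham : Measurable fun z : Θ × (∀ i, π i) => a z.1 z.2 := compLik_joint_meas μ α β γ hp_meas
  have ham' : Measurable (a θstar) := ham.comp (measurable_const.prodMk measurable_id)
  set M : ℕ → Ω → ℝ≥0∞ := fun n ω => safeDiv
        (∏ i ∈ Finset.range n, a (θtilde i ω) (X i ω))
        (∏ i ∈ Finset.range n, a θstar (X i ω)) with hM
  -- filtration
  have hXF : ∀ n i, i < n → Measurable[F n] (X i) := by
    intro n i hi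
    rw [hF n]
    have h1 : Measurable fun v : Fin n → ∀ i, π i => v ⟨i, hi⟩ := measurable_pi_apply _
    exact h1.comp (comap_measurable (fun ω => fun j : Fin n => X j ω))
  have hFle : ∀ n, F n ≤ (inferInstance : MeasurableSpace Ω) := by
    intro n
    rw [hF n]
    have h1 : Measurable (fun ω => fun j : Fin n => X j ω) := measurable_pi_lambda _ fun j => hX j
    exact h1.comap_le
  have hFmono : Monotone F := by
    intro m n hmn
    rw [hF m]
    refine Measurable.comap_le ?_
    refine @measurable_pi_lambda _ _ _ (F n) _ _ fun j => ?_
    exact hXF n j (j.2.trans_le hmn)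
  have hMm : ∀ n, Measurable[F n] (M n) := by
    intro n
    exact ratio_meas (F n) ham θstar n (fun i hi => (hθtilde i).mono (hFmono hi.le) le_rfl) (hXF n)
  -- independence
  have hind : ∀ n, ProbabilityTheory.Indep (F n)
      (MeasurableSpace.comap (X n) inferInstance) Pr := by
    intro n
    have h := hiid.indepFun_finset (Finset.range n) {n} (by simp) hX
    have m1 : Measurable fun v : (∀ i : Finset.range n, ∀ i, π i) =>
        fun j : Fin n => v ⟨j, Finset.mem_range.2 j.2⟩ :=
      measurable_pi_lambda _ fun j => measurable_pi_apply _
    have m2 : Measurable fun v : (∀ i : ({n} : Finset ℕ), ∀ i, π i) =>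
        v ⟨n, Finset.mem_singleton_self n⟩ := measurable_pi_apply _
    have h2 := h.comp m1 m2
    rw [hF n]
    exact h2
  have hgood : ∀ i, ∀ᵐ ω ∂Pr, a θstar (X i ω) ≠ 0 ∧ a θstar (X i ω) ≠ ∞ := by
    intro i
    have h := compLik_ne μ α β γ (hps θstar) (hp_prob θstar)
    rw [← hlaw i] at h
    exact ae_of_ae_map (hX i).aemeasurable h
  set R : ℕ → Ω → ℝ≥0∞ := fun n ω => safeDiv (a (θtilde n ω) (X n ω)) (a θstar (X n ω)) with hR
  have hstep : ∀ n, ∀ᵐ ω ∂Pr, M (n + 1) ω = M n ω * R n ω := by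
    intro n
    filter_upwards [ae_all_iff.2 hgood] with ω h
    simp only [hM, hR]
    rw [safeDiv_prod _ _ _ (fun i => (h i).1) (fun i => (h i).2),
      safeDiv_prod _ _ _ (fun i => (h i).1) (fun i => (h i).2), Finset.prod_range_succ]
  have hset : ∀ n (s : Set Ω), MeasurableSet[F n] s →
      ∫⁻ ω in s, M (n + 1) ω ∂Pr ≤ ∫⁻ ω in s, M n ω ∂Pr := by
    intro n s hs
    have hs' := hFle n _ hs
    have hY : Measurable[F n] (s.indicator (M n)) := (hMm n).indicator hs
    have hY' := hY.mono (hFle n) le_rfl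
    have hV : Measurable[F n] fun ω => (θtilde n ω, s.indicator (M n) ω) :=
      (hθtilde n).prodMk hY
    have hV' := hV.mono (hFle n) le_rfl
    refine (lintegral_congr_ae (ae_restrict_of_ae (hstep n))).trans_le ?_
    have hi : ProbabilityTheory.IndepFun (fun ω => (θtilde n ω, s.indicator (M n) ω)) (X n) Pr :=
      ProbabilityTheory.indep_of_indep_of_le_left (hind n) hV.comap_le
    refine set_step Pr ham θstar (M n) hs' (hV'.fst) hY' (hX n) hi ?_
    intro θ
    rw [hlaw n]
    exact ratio_lint μ α β hα hβ γ hγ hγpos (hps _) (hp_prob _) (hps _) (hp_prob _)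
  have hfin : ∀ n, ∫⁻ ω, M n ω ∂Pr ≤ 1 := by
    intro n
    induction n with
    | zero => simp [hM, safeDiv]
    | succ n ih =>
      have := hset n Set.univ MeasurableSet.univ
      simp only [Measure.restrict_univ] at this
      exact this.trans ih
  have hMm' : ∀ n, Measurable (M n) := fun n => (hMm n).mono (hFle n) le_rfl
  have hne : ∀ n, ∫⁻ ω, M n ω ∂Pr ≠ ∞ := fun n => ((hfin n).trans_lt ENNReal.one_lt_top).ne
  have hint : ∀ n, Integrable (fun ω => (M n ω).toReal) Pr := fun n =>
    integrable_toReal_of_lintegral_ne_top (hMm' n).aemeasurable (hne n)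
  have hadp : ∀ n, Measurable[F n] fun ω => (M n ω).toReal := fun n =>
    ENNReal.measurable_toReal.comp (hMm n)
  refine ⟨fun n ω => ENNReal.toReal_nonneg, hadp, hint, ?_⟩
  let 𝒢 : Filtration ℕ (inferInstance : MeasurableSpace Ω) := ⟨F, hFmono, hFle⟩
  have hsup : Supermartingale (fun n ω => (M n ω).toReal) 𝒢 Pr := by
    refine supermartingale_of_setIntegral_succ_le (fun n => (hadp n).stronglyMeasurable) hint ?_
    intro n s hs
    have key : ∀ m, ∫ ω in s, (M m ω).toReal ∂Pr = (∫⁻ ω in s, M m ω ∂Pr).toReal := by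
      intro m
      refine integral_toReal (hMm' m).aemeasurable (ae_restrict_of_ae ?_)
      exact ae_lt_top (hMm' m) (hne m)
    rw [key, key]
    exact ENNReal.toReal_mono ((setLIntegral_le_lintegral _ _).trans_lt
      (lt_top_iff_ne_top.2 (hne n))).ne (hset n s hs)
  intro n hn
  exact hsup.2.1 (n - 1) n (Nat.sub_le n 1)
end
end

section
/- The running p-value is valid at arbitrary random times: for any ℕ-valued random variable N (not necessarily a stopping time) and every a ∈ [0,1], sup_{θ*∈Θ_0} Pr_{θ*}(P_N ≤ a) ≤ a, where P_n = 1/M_{α,β,n} (taken to be +∞ when M_{α,β,n} = 0). -/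
open MeasureTheory ENNReal
open scoped BigOperators Classical

noncomputable section

variable {d : ℕ} {π : Fin d → Type*} [∀ i, MeasurableSpace (π i)]

lemma ennreal_div_mul_le (a b : ℝ≥0∞) : a / b * b ≤ a := by
  rw [div_eq_mul_inv, mul_assoc]
  exact (mul_le_mul_right (ENNReal.inv_mul_le_one b) a).trans (by simp)

lemma meas_pair {Ω E Θ : Type*} [MeasurableSpace Ω] [MeasurableSpace E] [MeasurableSpace Θ]
    (r : Θ × E → ℝ≥0∞) (hr : Measurable r) (V : Ω → Θ) (hV : Measurable V) (Z : Ω → E)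
    (hZ : Measurable Z) : Measurable (fun ω => r (V ω, Z ω)) := hr.comp (hV.prodMk hZ)

lemma meas_mul_pair {Ω E Θ : Type*} [MeasurableSpace Ω] [MeasurableSpace E] [MeasurableSpace Θ]
    (r : Θ × E → ℝ≥0∞) (hr : Measurable r) (V : Ω → Θ) (hV : Measurable V) (U : Ω → ℝ≥0∞)
    (hU : Measurable U) : Measurable (fun q : Ω × E => U q.1 * r (V q.1, q.2)) :=
  (hU.comp measurable_fst).mul (hr.comp ((hV.comp measurable_fst).prodMk measurable_snd))

lemma indep_id {Ω E : Type*} (m : MeasurableSpace Ω) [mΩ : MeasurableSpace Ω] [MeasurableSpace E]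
    (Pr : Measure Ω) (Z : Ω → E)
    (h : ProbabilityTheory.Indep m (MeasurableSpace.comap Z inferInstance) Pr) :
    @ProbabilityTheory.IndepFun Ω Ω E mΩ m _ id Z Pr := by
  refine (ProbabilityTheory.IndepFun_iff_Indep (mβ := m) id Z Pr).mpr ?_
  rw [MeasurableSpace.comap_id]
  exact h

section helpers

variable (μ : ∀ i, Measure (π i)) [∀ i, SigmaFinite (μ i)]

lemma lmarg_mul (s : Finset (Fin d)) (h f : (∀ i, π i) → ℝ≥0∞) (hf : Measurable f)
    (hh : ∀ x y, (∀ i, i ∉ s → x i = y i) → h x = h y) (x : ∀ i, π i) :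
    lmarginal μ s (fun x => h x * f x) x = h x * lmarginal μ s f x := by
  unfold lmarginal
  have hm : Measurable (fun y => f (Function.updateFinset x s y)) :=
    hf.comp measurable_updateFinset
  rw [← lintegral_const_mul _ hm]
  refine lintegral_congr fun y => ?_
  beta_reduce
  rw [hh (Function.updateFinset x s y) x]
  intro i hi
  simp [Function.updateFinset, hi]

lemma int_mul (S : Finset (Fin d)) (h f : (∀ i, π i) → ℝ≥0∞) (hf : Measurable f)
    (hhm : Measurable h)
    (hh : ∀ x y, (∀ i, i ∈ S → x i = y i) → h x = h y) (x₀ : ∀ i, π i) :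
    ∫⁻ x, h x * f x ∂(Measure.pi μ) = lmarginal μ S (fun x => h x * marginal μ S f x) x₀ := by
  rw [lintegral_eq_lmarginal_univ x₀, ← Finset.union_compl S,
    lmarginal_union μ (fun x => h x * f x) (hhm.mul hf) disjoint_compl_right]
  congr 1
  funext x
  rw [lmarg_mul μ _ h f hf]
  · rfl
  · intro x y hxy
    exact hh x y fun i hi => hxy i (by simpa using hi)

lemma int_marg (S : Finset (Fin d)) (f : (∀ i, π i) → ℝ≥0∞) (hf : Measurable f)
    (x₀ : ∀ i, π i) :
    lmarginal μ S (marginal μ S f) x₀ = ∫⁻ x, f x ∂(Measure.pi μ) := by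
  have := int_mul μ S (fun _ => 1) f hf measurable_const (fun _ _ _ => rfl) x₀
  simpa using this.symm

lemma marg_dep (S S' : Finset (Fin d)) (hS : S ⊆ S') (f : (∀ i, π i) → ℝ≥0∞) (x y : ∀ i, π i)
    (hxy : ∀ i, i ∈ S' → x i = y i) : marginal μ S f x = marginal μ S f y :=
  lmarginal_congr μ f fun i hi => hxy i (hS (by simpa using hi))

lemma marg_meas (S : Finset (Fin d)) (f : (∀ i, π i) → ℝ≥0∞) (hf : Measurable f) :
    Measurable (marginal μ S f) := hf.lmarginal μ

lemma safeDiv_meas_s9 : Measurable (fun q : ℝ≥0∞ × ℝ≥0∞ => safeDiv q.1 q.2) := by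
  unfold safeDiv
  exact Measurable.ite (measurable_snd (measurableSet_singleton 0)) measurable_const
    (measurable_fst.div measurable_snd)

lemma marg_meas2 {Θ : Type*} [MeasurableSpace Θ] (p : Θ → (∀ i, π i) → ℝ≥0∞)
    (hp : Measurable (Function.uncurry p)) (S : Finset (Fin d)) :
    Measurable (fun q : Θ × (∀ i, π i) => marginal μ S (p q.1) q.2) := by
  unfold marginal lmarginal
  have h : Measurable (fun r : (Θ × (∀ i, π i)) × (∀ i : (Sᶜ : Finset (Fin d)), π i) =>
      p r.1.1 (Function.updateFinset r.1.2 Sᶜ r.2)) := by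
    have h2 : Measurable (fun r : (Θ × (∀ i, π i)) × (∀ i : (Sᶜ : Finset (Fin d)), π i) =>
        Function.updateFinset r.1.2 Sᶜ r.2) :=
      measurable_updateFinset'.comp ((measurable_snd.comp measurable_fst).prodMk measurable_snd)
    exact hp.comp ((measurable_fst.comp measurable_fst).prodMk h2)
  exact Measurable.lintegral_prod_right' h

lemma compLik_meas2 {Θ : Type*} [MeasurableSpace Θ] (p : Θ → (∀ i, π i) → ℝ≥0∞)
    (hp : Measurable (Function.uncurry p)) (α : Sd d → ℝ) (β : Td d → ℝ) (γ : ℝ) :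
    Measurable (fun q : Θ × (∀ i, π i) => compLik μ α β γ (p q.1) q.2) := by
  unfold compLik
  refine Measurable.mul ?_ ?_
  · exact Finset.measurable_prod _ fun S _ => (marg_meas2 μ p hp S.1).pow_const _
  · refine Finset.measurable_prod _ fun T _ => Measurable.pow_const ?_ _
    exact safeDiv_meas_s9.comp ((marg_meas2 μ p hp _).prodMk (marg_meas2 μ p hp _))

/-- marginals of the true density are a.s. positive -/
lemma marg_pos (S : Finset (Fin d)) (f : (∀ i, π i) → ℝ≥0∞) (hf : Measurable f)
    (x₀ : ∀ i, π i) :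
    ∀ᵐ x ∂((Measure.pi μ).withDensity f), marginal μ S f x ≠ 0 := by
  have hm := marg_meas μ S f hf
  have hA : MeasurableSet {x | marginal μ S f x = 0} := hm (measurableSet_singleton 0)
  rw [ae_iff]
  simp only [ne_eq, not_not]
  rw [withDensity_apply _ hA, ← lintegral_indicator hA]
  have : ({x | marginal μ S f x = 0}.indicator f) =
      fun x => (if marginal μ S f x = 0 then 1 else 0) * f x := by
    funext x; simp [Set.indicator]
  rw [this, int_mul μ S _ f hf _ _ x₀]
  · have : (fun x => (if marginal μ S f x = 0 then (1:ℝ≥0∞) else 0) * marginal μ S f x)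
        = fun _ => 0 := by
      funext x; split_ifs with h <;> simp [h]
    rw [this]; simp [lmarginal]
  · exact Measurable.ite hA measurable_const measurable_const
  · intro x y hxy
    simp only [marg_dep μ S S subset_rfl f x y hxy]

/-- marginals of the true density are a.s. finite -/
lemma marg_fin (S : Finset (Fin d)) (f : (∀ i, π i) → ℝ≥0∞) (hf : Measurable f)
    (h1 : ∫⁻ x, f x ∂(Measure.pi μ) = 1) (x₀ : ∀ i, π i) :
    ∀ᵐ x ∂((Measure.pi μ).withDensity f), marginal μ S f x ≠ ∞ := by
  have hm := marg_meas μ S f hf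
  have hA : MeasurableSet {x | marginal μ S f x = ∞} := hm (measurableSet_singleton ∞)
  rw [ae_iff]
  simp only [ne_eq, not_not]
  have hle : ((Measure.pi μ).withDensity f) {x | marginal μ S f x = ∞} ≤ 1 := by
    rw [withDensity_apply _ hA, ← h1]; exact setLIntegral_le_lintegral _ _
  rw [withDensity_apply _ hA, ← lintegral_indicator hA] at hle ⊢
  have : ({x | marginal μ S f x = ∞}.indicator f) =
      fun x => (if marginal μ S f x = ∞ then 1 else 0) * f x := by
    funext x; simp [Set.indicator]
  rw [this, int_mul μ S _ f hf _ _ x₀] at hle ⊢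
  · have h2 : (fun x => (if marginal μ S f x = ∞ then (1:ℝ≥0∞) else 0) * marginal μ S f x)
        = fun x => ∞ * (if marginal μ S f x = ∞ then (1:ℝ≥0∞) else 0) := by
      funext x; split_ifs with h <;> simp [h]
    rw [h2, lmarg_mul μ S (fun _ => ∞) _ _ (fun _ _ _ => rfl)] at hle ⊢
    · by_contra hne
      rw [ENNReal.top_mul] at hle
      · simp at hle
      · intro h0; rw [h0] at hne; simp at hne
    · exact Measurable.ite hA measurable_const measurable_const
    · exact Measurable.ite hA measurable_const measurable_const
  all_goals first
    | exact Measurable.ite hA measurable_const measurable_const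
    | (intro x y hxy
       simp only [marg_dep μ S S subset_rfl f x y hxy])

lemma ratio_marg (S : Finset (Fin d)) (f g : (∀ i, π i) → ℝ≥0∞) (hf : Measurable f)
    (hg : Measurable g) (hg1 : ∫⁻ x, g x ∂(Measure.pi μ) = 1) (x₀ : ∀ i, π i) :
    ∫⁻ x, marginal μ S g x / marginal μ S f x ∂((Measure.pi μ).withDensity f) ≤ 1 := by
  have hm : Measurable (fun x => marginal μ S g x / marginal μ S f x) :=
    (marg_meas μ S g hg).div (marg_meas μ S f hf)
  rw [lintegral_withDensity_eq_lintegral_mul _ hf hm]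
  simp only [Pi.mul_apply]
  simp_rw [mul_comm (f _)]
  rw [int_mul μ S _ f hf hm _ x₀, ← hg1, ← int_marg μ S g hg x₀]
  · exact lmarginal_mono (fun x => ennreal_div_mul_le _ _) x₀
  · intro x y hxy
    simp only [marg_dep μ S S subset_rfl _ x y hxy]

lemma marg_marg (T1 T2 : Finset (Fin d)) (hT : Disjoint T1 T2) (f : (∀ i, π i) → ℝ≥0∞)
    (hf : Measurable f) : lmarginal μ T1 (marginal μ (T1 ∪ T2) f) = marginal μ T2 f := by
  unfold marginal
  rw [← lmarginal_union μ f hf]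
  · congr 1
    ext i
    have : i ∈ T1 → i ∉ T2 := fun h => Finset.disjoint_left.mp hT h
    simp; tauto
  · rw [Finset.disjoint_left]; intro i hi; simp [hi]

lemma cond_int (T1 T2 : Finset (Fin d)) (hT : Disjoint T1 T2) (g : (∀ i, π i) → ℝ≥0∞)
    (hg : Measurable g) (x : ∀ i, π i) :
    lmarginal μ T1 (condDens μ T1 T2 g) x ≤ 1 := by
  have : condDens μ T1 T2 g = fun x =>
      (if marginal μ T2 g x = 0 then 0 else (marginal μ T2 g x)⁻¹) *
        marginal μ (T1 ∪ T2) g x := by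
    funext x; unfold condDens safeDiv; split_ifs
    · simp
    · rw [div_eq_mul_inv, mul_comm]
  rw [this, lmarg_mul μ T1 (fun x => if marginal μ T2 g x = 0 then 0 else (marginal μ T2 g x)⁻¹)
    _ (marg_meas μ _ g hg), marg_marg μ T1 T2 hT g hg]
  · split_ifs
    · simp
    · exact ENNReal.inv_mul_le_one _
  · intro x y hxy
    rw [marg_dep μ T2 T2 subset_rfl g x y]
    intro i hi
    exact hxy i (Finset.disjoint_right.mp hT hi)

lemma condDens_meas (T1 T2 : Finset (Fin d)) (g : (∀ i, π i) → ℝ≥0∞)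
    (hg : Measurable g) : Measurable (condDens μ T1 T2 g) :=
  safeDiv_meas_s9.comp ((marg_meas μ _ g hg).prodMk (marg_meas μ _ g hg))

lemma ratio_cond (T1 T2 : Finset (Fin d)) (hT : Disjoint T1 T2)
    (f g : (∀ i, π i) → ℝ≥0∞) (hf : Measurable f)
    (hg : Measurable g) (hf1 : ∫⁻ x, f x ∂(Measure.pi μ) = 1) (x₀ : ∀ i, π i) :
    ∫⁻ x, condDens μ T1 T2 g x / condDens μ T1 T2 f x ∂((Measure.pi μ).withDensity f) ≤ 1 := by
  have hm12 := marg_meas μ (T1 ∪ T2) f hf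
  have hm2 := marg_meas μ T2 f hf
  have hc := condDens_meas μ T1 T2 g hg
  have hm : Measurable (fun x => marginal μ T2 f x * condDens μ T1 T2 g x /
      marginal μ (T1 ∪ T2) f x) := (hm2.mul hc).div hm12
  calc _ ≤ ∫⁻ x, marginal μ T2 f x * condDens μ T1 T2 g x / marginal μ (T1 ∪ T2) f x
            ∂((Measure.pi μ).withDensity f) := by
        refine lintegral_mono_ae ?_
        filter_upwards [marg_pos μ T2 f hf x₀, marg_fin μ T2 f hf hf1 x₀] with x h1 h2
        apply le_of_eq
        generalize condDens μ T1 T2 g x = c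
        unfold condDens safeDiv
        rw [if_neg h1, div_eq_mul_inv, ENNReal.inv_div (Or.inl h2) (Or.inl h1)]
        simp only [div_eq_mul_inv]; ring
    _ ≤ lmarginal μ (T1 ∪ T2) (fun x => marginal μ T2 f x * condDens μ T1 T2 g x) x₀ := by
        rw [lintegral_withDensity_eq_lintegral_mul _ hf hm]
        simp only [Pi.mul_apply]
        simp_rw [mul_comm (f _)]
        rw [int_mul μ (T1 ∪ T2) _ f hf hm _ x₀]
        · exact lmarginal_mono (fun x => ennreal_div_mul_le _ _) x₀
        · intro x y hxy
          simp only [condDens, marg_dep μ T2 (T1 ∪ T2) Finset.subset_union_right _ x y hxy,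
            marg_dep μ (T1 ∪ T2) (T1 ∪ T2) subset_rfl _ x y hxy]
    _ = lmarginal μ T2 (fun x => marginal μ T2 f x * lmarginal μ T1 (condDens μ T1 T2 g) x) x₀ := by
        rw [lmarginal_union' μ (fun x => marginal μ T2 f x * condDens μ T1 T2 g x) (hm2.mul hc) hT]
        congr 1
        funext x
        rw [lmarg_mul μ T1 _ _ hc]
        intro x y hxy
        exact marg_dep μ T2 T2 subset_rfl f x y fun i hi =>
          hxy i (Finset.disjoint_right.mp hT hi)
    _ ≤ lmarginal μ T2 (marginal μ T2 f) x₀ := by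
        refine lmarginal_mono (fun x => ?_) x₀
        exact (mul_le_mul_right (cond_int μ T1 T2 hT g hg x) _).trans (by simp)
    _ = 1 := by rw [int_marg μ T2 f hf, hf1]

lemma all_good (f : (∀ i, π i) → ℝ≥0∞) (hf : Measurable f)
    (hf1 : ∫⁻ x, f x ∂(Measure.pi μ) = 1) (x₀ : ∀ i, π i) :
    ∀ᵐ x ∂((Measure.pi μ).withDensity f), ∀ S, marginal μ S f x ≠ 0 ∧ marginal μ S f x ≠ ∞ := by
  rw [ae_all_iff]
  intro S
  filter_upwards [marg_pos μ S f hf x₀, marg_fin μ S f hf hf1 x₀] with x h1 h2 using ⟨h1, h2⟩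

lemma cond_good (f : (∀ i, π i) → ℝ≥0∞) (x : ∀ i, π i)
    (h : ∀ S, marginal μ S f x ≠ 0 ∧ marginal μ S f x ≠ ∞) (T1 T2 : Finset (Fin d)) :
    condDens μ T1 T2 f x ≠ 0 ∧ condDens μ T1 T2 f x ≠ ∞ := by
  unfold condDens safeDiv
  rw [if_neg (h T2).1]
  exact ⟨ENNReal.div_ne_zero.mpr ⟨(h _).1, (h _).2⟩, ENNReal.div_ne_top (h _).2 (h _).1⟩

lemma compLik_good (α : Sd d → ℝ) (β : Td d → ℝ) (γ : ℝ)
    (f : (∀ i, π i) → ℝ≥0∞) (x : ∀ i, π i)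
    (h : ∀ S, marginal μ S f x ≠ 0 ∧ marginal μ S f x ≠ ∞) :
    compLik μ α β γ f x ≠ 0 ∧ compLik μ α β γ f x ≠ ∞ := by
  have hc := cond_good μ f x h
  unfold compLik
  constructor
  · refine mul_ne_zero (Finset.prod_ne_zero_iff.mpr fun S _ => ?_)
      (Finset.prod_ne_zero_iff.mpr fun T _ => ?_)
    · exact (ENNReal.rpow_pos (pos_iff_ne_zero.mpr (h _).1) (h _).2).ne'
    · exact (ENNReal.rpow_pos (pos_iff_ne_zero.mpr (hc _ _).1) (hc _ _).2).ne'
  · refine ENNReal.mul_ne_top (ENNReal.prod_ne_top fun S _ => ?_)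
      (ENNReal.prod_ne_top fun T _ => ?_)
    · exact ENNReal.rpow_ne_top_of_ne_zero (h _).1 (h _).2
    · exact ENNReal.rpow_ne_top_of_ne_zero (hc _ _).1 (hc _ _).2

lemma ratio_compLik (α : Sd d → ℝ) (β : Td d → ℝ) (hα : ∀ S, 0 ≤ α S) (hβ : ∀ T, 0 ≤ β T)
    (γ : ℝ) (hγ : γ = ∑ S, α S + ∑ T, β T) (hγpos : 0 < γ)
    (f g : (∀ i, π i) → ℝ≥0∞) (hf : Measurable f)
    (hg : Measurable g) (hf1 : ∫⁻ x, f x ∂(Measure.pi μ) = 1)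
    (hg1 : ∫⁻ x, g x ∂(Measure.pi μ) = 1) (x₀ : ∀ i, π i) :
    ∫⁻ x, compLik μ α β γ g x / compLik μ α β γ f x ∂((Measure.pi μ).withDensity f) ≤ 1 := by
  let R : Sd d ⊕ Td d → (∀ i, π i) → ℝ≥0∞ := Sum.elim
    (fun S x => marginal μ S.1 g x / marginal μ S.1 f x)
    (fun T x => condDens μ T.1.1 T.1.2 g x / condDens μ T.1.1 T.1.2 f x)
  let w : Sd d ⊕ Td d → ℝ := Sum.elim (fun S => α S / γ) (fun T => β T / γ)
  have hw : ∀ i, 0 ≤ w i := by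
    rintro (S | T)
    · exact div_nonneg (hα S) hγpos.le
    · exact div_nonneg (hβ T) hγpos.le
  have hw1 : ∑ i, w i = 1 := by
    rw [Fintype.sum_sum_type]
    simp only [w, Sum.elim_inl, Sum.elim_inr]
    rw [← Finset.sum_div, ← Finset.sum_div, ← add_div, ← hγ, div_self hγpos.ne']
  have hRm : ∀ i, Measurable (R i) := by
    rintro (S | T)
    · exact (marg_meas μ _ g hg).div (marg_meas μ _ f hf)
    · exact (condDens_meas μ _ _ g hg).div (condDens_meas μ _ _ f hf)
  have hR1 : ∀ i, ∫⁻ x, R i x ∂((Measure.pi μ).withDensity f) ≤ 1 := by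
    rintro (S | T)
    · exact ratio_marg μ S.1 f g hf hg hg1 x₀
    · exact ratio_cond μ T.1.1 T.1.2 T.2.2.2 f g hf hg hf1 x₀
  calc _ ≤ ∫⁻ x, ∏ i, R i x ^ w i ∂((Measure.pi μ).withDensity f) := by
        refine lintegral_mono_ae ?_
        filter_upwards [all_good μ f hf hf1 x₀] with x hx
        have hc := cond_good μ f x hx
        refine ENNReal.div_le_of_le_mul (le_of_eq ?_)
        rw [Fintype.prod_sum_type]
        simp only [R, w, Sum.elim_inl, Sum.elim_inr]
        unfold compLik
        rw [mul_mul_mul_comm, ← Finset.prod_mul_distrib, ← Finset.prod_mul_distrib]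
        congr 1
        · refine Finset.prod_congr rfl fun S _ => ?_
          rw [← ENNReal.mul_rpow_of_nonneg _ _ (show 0 ≤ α S / γ from hw (Sum.inl S)),
            ENNReal.div_mul_cancel (hx _).1 (hx _).2]
        · refine Finset.prod_congr rfl fun T _ => ?_
          rw [← ENNReal.mul_rpow_of_nonneg _ _ (show 0 ≤ β T / γ from hw (Sum.inr T)),
            ENNReal.div_mul_cancel (hc _ _).1 (hc _ _).2]
    _ ≤ ∏ i, (∫⁻ x, R i x ∂((Measure.pi μ).withDensity f)) ^ w i :=
        ENNReal.lintegral_prod_norm_pow_le _ (fun i _ => (hRm i).aemeasurable) hw1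
          (fun i _ => hw i)
    _ ≤ 1 := Finset.prod_le_one' fun i _ => ENNReal.rpow_le_one (hR1 i) (hw i)

end helpers

lemma indep_lint {Ω Ω' E : Type*} [MeasurableSpace Ω] [MeasurableSpace Ω'] [MeasurableSpace E]
    (Pr : Measure Ω) [IsProbabilityMeasure Pr] (Y : Ω → Ω') (X : Ω → E) (hY : Measurable Y)
    (hX : Measurable X) (hind : ProbabilityTheory.IndepFun Y X Pr)
    (g : Ω' × E → ℝ≥0∞) (hg : Measurable g) :
    ∫⁻ ω, g (Y ω, X ω) ∂Pr = ∫⁻ ω, ∫⁻ x, g (Y ω, x) ∂(Measure.map X Pr) ∂Pr := by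
  have : IsProbabilityMeasure (Measure.map X Pr) := Measure.isProbabilityMeasure_map hX.aemeasurable
  have h := (ProbabilityTheory.indepFun_iff_map_prod_eq_prod_map_map hY.aemeasurable
    hX.aemeasurable).mp hind
  rw [← lintegral_map (f := g) (g := fun ω => (Y ω, X ω)) hg (hY.prodMk hX), h,
    lintegral_prod _ hg.aemeasurable,
    lintegral_map (f := fun y => ∫⁻ x, g (y, x) ∂(Measure.map X Pr)) hg.lintegral_prod_right' hY]

lemma ville {Ω : Type*} [MeasurableSpace Ω] (Pr : Measure Ω) [IsProbabilityMeasure Pr]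
    (F : ℕ → MeasurableSpace Ω) (hle : ∀ n, F n ≤ ‹MeasurableSpace Ω›) (hmono : Monotone F)
    (L : ℕ → Ω → ℝ≥0∞) (hL : ∀ n, Measurable[F n] (L n)) (h0 : ∫⁻ ω, L 0 ω ∂Pr ≤ 1)
    (hstep : ∀ n (A : Set Ω), MeasurableSet[F n] A →
      ∫⁻ ω in A, L (n + 1) ω ∂Pr ≤ ∫⁻ ω in A, L n ω ∂Pr) (c : ℝ≥0∞) :
    Pr {ω | ∃ n, c ≤ L n ω} ≤ c⁻¹ := by
  let B : ℕ → Set Ω := fun n => {ω | ∃ k ≤ n, c ≤ L k ω}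
  have hBm : ∀ n, MeasurableSet[F n] (B n) := by
    intro n
    have : B n = ⋃ k ∈ Set.Iic n, {ω | c ≤ L k ω} := by ext; simp [B]
    rw [this]
    refine MeasurableSet.biUnion (Set.to_countable _) fun k hk => ?_
    exact hmono hk _ ((hL k) measurableSet_Ici)
  have key : ∀ n (A : Set Ω), MeasurableSet A →
      c * Pr (A ∩ {ω | c ≤ L n ω}) + ∫⁻ ω in A ∩ {ω | c ≤ L n ω}ᶜ, L n ω ∂Pr
        ≤ ∫⁻ ω in A, L n ω ∂Pr := by
    intro n A hA
    have hD : MeasurableSet {ω | c ≤ L n ω} := hle n _ ((hL n) measurableSet_Ici)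
    rw [← lintegral_inter_add_sdiff (L n) A hD (μ := Pr), ← Set.sdiff_eq]
    refine add_le_add_left ?_ _
    rw [← setLIntegral_const]
    exact setLIntegral_mono' (hA.inter hD) fun ω hω => hω.2
  have main : ∀ n, c * Pr (B n) + ∫⁻ ω in (B n)ᶜ, L n ω ∂Pr ≤ 1 := by
    intro n
    induction n with
    | zero =>
      have hB : B 0 = {ω | c ≤ L 0 ω} := by ext; simp [B]
      have := key 0 Set.univ MeasurableSet.univ
      simp only [Set.univ_inter, Measure.restrict_univ] at this
      rw [hB]; exact this.trans h0
    | succ n ih =>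
      have hB : B (n + 1) = B n ∪ ((B n)ᶜ ∩ {ω | c ≤ L (n + 1) ω}) := by
        ext ω
        simp only [B, Set.mem_ofPred_eq, Set.mem_union, Set.mem_inter_iff, Set.mem_compl_iff]
        constructor
        · rintro ⟨k, hk, h⟩
          by_cases hh : ∃ k ≤ n, c ≤ L k ω
          · exact Or.inl hh
          · refine Or.inr ⟨hh, ?_⟩
            rcases Nat.le_succ_iff.mp hk with h' | h'
            · exact absurd ⟨k, h', h⟩ hh
            · subst h'; exact h
        · rintro (⟨k, hk, h⟩ | ⟨_, h⟩)
          · exact ⟨k, by omega, h⟩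
          · exact ⟨n + 1, le_rfl, h⟩
      have hBc : (B (n + 1))ᶜ = (B n)ᶜ ∩ {ω | c ≤ L (n + 1) ω}ᶜ := by
        rw [hB]; ext ω; simp; tauto
      have hk := key (n + 1) (B n)ᶜ (hle n _ (hBm n)).compl
      rw [← hBc] at hk
      calc _ ≤ (c * Pr (B n) + c * Pr ((B n)ᶜ ∩ {ω | c ≤ L (n + 1) ω}))
              + ∫⁻ ω in (B (n+1))ᶜ, L (n+1) ω ∂Pr := by
            gcongr
            rw [← mul_add]
            gcongr
            conv_lhs => rw [hB]
            exact measure_union_le _ _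
        _ ≤ c * Pr (B n) + ∫⁻ ω in (B n)ᶜ, L (n+1) ω ∂Pr := by
            rw [add_assoc]; gcongr
        _ ≤ c * Pr (B n) + ∫⁻ ω in (B n)ᶜ, L n ω ∂Pr := by
            exact add_le_add_right (hstep n _ (hBm n).compl) _
        _ ≤ 1 := ih
  have hU : {ω | ∃ n, c ≤ L n ω} = ⋃ n, B n := by
    ext ω; simp only [B, Set.mem_ofPred_eq, Set.mem_iUnion]
    exact ⟨fun ⟨n, h⟩ => ⟨n, n, le_rfl, h⟩, fun ⟨_, k, _, h⟩ => ⟨k, h⟩⟩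
  have hBmono : Monotone B := fun m n hmn ω ⟨k, hk, h⟩ => ⟨k, hk.trans hmn, h⟩
  rw [hU, hBmono.measure_iUnion]
  refine iSup_le fun n => ?_
  rw [ENNReal.le_inv_iff_mul_le, mul_comm]
  exact le_self_add.trans (main n)


/-- The running p-value is valid at arbitrary random times: for any
`ℕ`-valued random variable `N` (not necessarily a stopping time) and every
`a ∈ [0,1]`, `sup_{θ*∈Θ₀} Pr_{θ*}(P_N ≤ a) ≤ a`, where `P_n = 1/M_{α,β,n}`
(equal to `+∞` when `M_{α,β,n} = 0`). -/
theorem running_p_value_valid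
    {d : ℕ} (hd : 1 ≤ d)
    {π : Fin d → Type*} [∀ i, MeasurableSpace (π i)]
    (μ : ∀ i, Measure (π i)) [∀ i, SigmaFinite (μ i)]
    {Θ : Type*} [MeasurableSpace Θ]
    (p : Θ → (∀ i, π i) → ℝ≥0∞)
    (hp_meas : Measurable (Function.uncurry p))
    (hp_prob : ∀ θ : Θ, ∫⁻ x, p θ x ∂(Measure.pi μ) = 1)
    (α : Sd d → ℝ) (β : Td d → ℝ)
    (hα : ∀ S, 0 ≤ α S) (hβ : ∀ T, 0 ≤ β T)
    (γ : ℝ) (hγ : γ = ∑ S, α S + ∑ T, β T) (hγpos : 0 < γ)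
    {Ω : Type*} [MeasurableSpace Ω]
    (Pr : Measure Ω) [IsProbabilityMeasure Pr]
    (θstar : Θ)
    -- `X 0, X 1, X 2, …` is the i.i.d. sequence `X_1, X_2, …` (0-indexed),
    -- each observation having density `p(·;θ*)` with respect to `μ`
    (X : ℕ → Ω → (∀ i, π i))
    (hX : ∀ i, Measurable (X i))
    (hiid : ProbabilityTheory.iIndepFun X Pr)
    (hlaw : ∀ i, Measure.map (X i) Pr = (Measure.pi μ).withDensity (p θstar))
    -- the natural filtration `F n = σ(X_1,…,X_n)` (so `F 0` is trivial)
    (F : ℕ → MeasurableSpace Ω)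
    (hF : ∀ n, F n = MeasurableSpace.comap (fun ω => fun j : Fin n => X j ω)
      (inferInstance : MeasurableSpace (Fin n → ∀ i, π i)))
    -- non-anticipating estimators: `θtilde i` is the estimator `θ̃_i`
    -- built from `X_1,…,X_i`, i.e. measurable with respect to `F i`
    (θtilde : ℕ → Ω → Θ)
    (hθtilde : ∀ i, @Measurable Ω Θ (F i) _ (θtilde i))
    -- null hypothesis parameter space and maximum composite likelihood
    -- estimators over `Θ₀`: `θhat n` is `F n`-measurable, `Θ₀`-valued and
    -- maximizes the composite likelihood of the first `n` observations over `Θ₀`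
    (Θ0 : Set Θ)
    (θhat : ℕ → Ω → Θ)
    (hθhat_meas : ∀ n, @Measurable Ω Θ (F n) _ (θhat n))
    (hθhat_mem : ∀ n ω, θhat n ω ∈ Θ0)
    (hθhat_max : ∀ n ω, ∀ θ ∈ Θ0,
      (∏ i ∈ Finset.range n, compLik μ α β γ (p θ) (X i ω))
        ≤ ∏ i ∈ Finset.range n, compLik μ α β γ (p (θhat n ω)) (X i ω))
    -- the DGP parameter lies in the null hypothesis set
    (hθstar : θstar ∈ Θ0)
    (N : Ω → ℕ) (hN : Measurable N)
    (a : ℝ) (ha0 : 0 ≤ a) (ha1 : a ≤ 1) :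
    Pr {ω | (safeDiv
        (∏ i ∈ Finset.range (N ω), compLik μ α β γ (p (θtilde i ω)) (X i ω))
        (∏ i ∈ Finset.range (N ω), compLik μ α β γ (p (θhat (N ω) ω)) (X i ω)))⁻¹
      ≤ ENNReal.ofReal a} ≤ ENNReal.ofReal a := by
  -- natural filtration facts
  have hXF : ∀ n i, i < n → Measurable[F n] (X i) := by
    intro n i hi
    rw [hF]
    have h1 : Measurable[MeasurableSpace.comap (fun ω => fun j : Fin n => X j ω)
      (inferInstance : MeasurableSpace (Fin n → ∀ i, π i))]
      (fun ω => fun j : Fin n => X j ω) := comap_measurable _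
    exact (measurable_pi_apply (⟨i, hi⟩ : Fin n)).comp h1
  have hFle : ∀ n, F n ≤ ‹MeasurableSpace Ω› := by
    intro n
    rw [hF]
    exact Measurable.comap_le (measurable_pi_lambda _ fun j => hX j)
  have hFmono : Monotone F := by
    intro m n hmn
    conv_lhs => rw [hF]
    refine Measurable.comap_le ?_
    exact @measurable_pi_lambda _ _ _ (F n) _ _ fun j => hXF n j (lt_of_lt_of_le j.2 hmn)
  have hind : ∀ n, ProbabilityTheory.Indep (F n) (MeasurableSpace.comap (X n) inferInstance) Pr := by
    intro n
    have h := hiid.indepFun_finset (Finset.range n) {n} (by simp) hX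
    have hφ : Measurable (fun (z : Finset.range n → ∀ i, π i) (j : Fin n) =>
        z ⟨j, Finset.mem_range.mpr j.2⟩) :=
      measurable_pi_lambda _ fun j => measurable_pi_apply _
    have hψ : Measurable (fun (z : ({n} : Finset ℕ) → ∀ i, π i) =>
        z ⟨n, Finset.mem_singleton_self n⟩) := measurable_pi_apply _
    have h2 := h.comp hφ hψ
    rw [ProbabilityTheory.IndepFun_iff_Indep] at h2
    rw [hF]
    exact h2
  obtain ⟨ω₀⟩ : Nonempty Ω := Pr.nonempty_of_neZero
  have x₀ := X 0 ω₀
  have hpm : ∀ θ, Measurable (p θ) := fun θ => hp_meas.comp measurable_prodMk_left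
  have hcm := compLik_meas2 μ p hp_meas α β γ
  let C : Θ → (∀ i, π i) → ℝ≥0∞ := fun θ x => compLik μ α β γ (p θ) x
  let r : Θ × (∀ i, π i) → ℝ≥0∞ := fun q => C q.1 q.2 / C θstar q.2
  have hCs : Measurable (C θstar) := hcm.comp measurable_prodMk_left
  have hr : Measurable r := hcm.div (hCs.comp measurable_snd)
  let L : ℕ → Ω → ℝ≥0∞ := fun n ω => ∏ i ∈ Finset.range n, r (θtilde i ω, X i ω)
  have hL : ∀ n, Measurable[F n] (L n) := by
    intro n
    refine @Finset.measurable_prod _ _ _ _ _ _ (F n) _ _ fun i hi => ?_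
    have hi' := Finset.mem_range.mp hi
    exact @meas_pair Ω _ Θ (F n) _ _ r hr (θtilde i)
      ((hθtilde i).mono (hFmono hi'.le) le_rfl) (X i) (hXF n i hi')
  have hstep : ∀ n (A : Set Ω), MeasurableSet[F n] A →
      ∫⁻ ω in A, L (n + 1) ω ∂Pr ≤ ∫⁻ ω in A, L n ω ∂Pr := by
    intro n A hA
    have hA' := hFle n _ hA
    rw [← lintegral_indicator hA', ← lintegral_indicator hA']
    let g : Ω × (∀ i, π i) → ℝ≥0∞ := fun q => A.indicator (L n) q.1 * r (θtilde n q.1, q.2)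
    have hAL : Measurable[F n] (A.indicator (L n)) := (hL n).indicator hA
    have hg : @Measurable _ _ (@Prod.instMeasurableSpace _ _ (F n) _) _ g :=
      @meas_mul_pair Ω _ Θ (F n) _ _ r hr (θtilde n) (hθtilde n) _ hAL
    have hid : @Measurable Ω Ω _ (F n) id := measurable_id'' (hFle n)
    have hin : @ProbabilityTheory.IndepFun Ω Ω _ _ (F n) _ id (X n) Pr :=
      @indep_id Ω _ (F n) _ _ Pr (X n) (hind n)
    have key := @indep_lint Ω Ω (∀ i, π i) _ (F n) _ Pr _ id (X n) hid (hX n) hin g hg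
    have e1 : ∀ ω, A.indicator (L (n + 1)) ω = g (id ω, X n ω) := by
      intro ω
      by_cases hω : ω ∈ A <;> simp [g, hω, L, Finset.prod_range_succ]
    simp_rw [e1]
    rw [key]
    refine lintegral_mono fun ω => ?_
    simp only [g, id]
    have hm : Measurable (fun x => r (θtilde n ω, x)) := hr.comp measurable_prodMk_left
    rw [lintegral_const_mul _ hm, hlaw n]
    refine (mul_le_mul_right (ratio_compLik μ α β hα hβ γ hγ hγpos (p θstar) (p (θtilde n ω))
      (hpm _) (hpm _) (hp_prob _) (hp_prob _) x₀) _).trans (by simp)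
  have hV := ville Pr F hFle hFmono L hL (by simp [L]) hstep (ENNReal.ofReal a)⁻¹
  rw [inv_inv] at hV
  refine le_trans (measure_mono_ae ?_) hV
  have hgood : ∀ᵐ ω ∂Pr, ∀ i, C θstar (X i ω) ≠ 0 ∧ C θstar (X i ω) ≠ ∞ := by
    rw [ae_all_iff]
    intro i
    have h := all_good μ (p θstar) (hpm _) (hp_prob _) x₀
    rw [← hlaw i] at h
    filter_upwards [ae_of_ae_map (hX i).aemeasurable h] with ω hω
    exact compLik_good μ α β γ _ _ hω
  filter_upwards [hgood] with ω hω hP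
  refine ⟨N ω, ?_⟩
  have hP' := ENNReal.inv_le_iff_inv_le.mp (show _ ≤ _ from hP)
  refine hP'.trans ?_
  unfold safeDiv
  split_ifs with h0
  · simp
  · refine (ENNReal.div_le_div_left (hθhat_max (N ω) ω θstar hθstar) _).trans ?_
    refine ENNReal.div_le_of_le_mul (le_of_eq ?_)
    simp only [L]
    rw [← Finset.prod_mul_distrib]
    refine Finset.prod_congr rfl fun i _ => ?_
    exact (ENNReal.div_mul_cancel (hω i).1 (hω i).2).symm
end
end
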